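/- Let G be a finite connected simple graph with twin classes C_1, …, C_k, and let S be a set of l vertices of G such that |S ∩ C_i| ≤ 1 for every i. Choose the representatives c_i so that every element of S is a representative, and let H be the reduced graph (the subgraph induced by {c_1, …, c_k}). Then the Steiner distance of S computed in H equals the Steiner distance of S computed in G: d_H(S) = d_G(S). -/

import Mathlib

open SimpleGraph

/-- Two vertices `u` and `v` of a simple graph are *twins* if
`N(u) \ {v} = N(v) \ {u}`, where `N` denotes the open neighborhood. -/
def IsTwin {V : Type*} (G : SimpleGraph V) (u v : V) : Prop :=
  G.neighborSet u \ {v} = G.neighborSet v \ {u}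

/-- The *Steiner distance* of a set `S` of vertices of `G`: the minimum number of edges
of a connected subgraph of `G` containing all vertices of `S`. -/
noncomputable def steinerDist {V : Type*} (G : SimpleGraph V) (S : Set V) : ℕ :=
  sInf {n | ∃ T : G.Subgraph, T.Connected ∧ S ⊆ T.verts ∧ T.edgeSet.ncard = n}

/-!
Sending every vertex to a twin inside a set `R`, and fixing `R` pointwise, is a retraction
`V → R` that maps each edge of `G` to an edge of `G[R]` or collapses it: replacing one endpoint of
an edge by a twin keeps it an edge unless the two endpoints become equal. The image of a connected
subgraph under such a map is connected and has at most as many edges, so the retraction and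
the inclusion of `G[R]` into `G` give the two inequalities between the Steiner distances.
-/

section

variable {V W : Type*} {G : SimpleGraph V} {H : SimpleGraph W} {f : V → W}

/-- A *weak homomorphism* of graphs: a map of vertices sending each edge to an edge or collapsing
it to a vertex. Unlike a `SimpleGraph.Hom`, it may identify adjacent vertices, as the retraction
onto a set of twin representatives does. -/
def IsWeakHom (G : SimpleGraph V) (H : SimpleGraph W) (f : V → W) : Prop :=
  ∀ ⦃u v⦄, G.Adj u v → f u ≠ f v → H.Adj (f u) (f v)

namespace IsWeakHom

theorem of_hom (φ : G →g H) : IsWeakHom G H φ := fun _ _ huv _ => φ.map_adj huv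

theorem reachable (hf : IsWeakHom G H f) {u v : V} (huv : G.Reachable u v) :
    H.Reachable (f u) (f v) := by
  obtain ⟨p⟩ := huv
  induction p with
  | nil => rfl
  | @cons u w _ huw _ ih =>
    by_cases h : f u = f w
    · rwa [h]
    · exact (hf huw h).reachable.trans ih

theorem connected_of_surjective (hf : IsWeakHom G H f) (hsurj : f.Surjective)
    (hG : G.Connected) : H.Connected where
  preconnected := hsurj.forall₂.2 fun u v => hf.reachable (hG.preconnected u v)
  nonempty := hG.nonempty.map f

/-- The image of a subgraph under a weak homomorphism; collapsed edges leave no edge behind. -/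
def mapSubgraph (hf : IsWeakHom G H f) (T : G.Subgraph) : H.Subgraph where
  verts := f '' T.verts
  Adj x y := x ≠ y ∧ ∃ u v, T.Adj u v ∧ f u = x ∧ f v = y
  adj_sub := by
    rintro _ _ ⟨hne, u, v, huv, rfl, rfl⟩
    exact hf huv.adj_sub hne
  edge_vert := by
    rintro _ _ ⟨-, u, v, huv, rfl, rfl⟩
    exact Set.mem_image_of_mem f huv.fst_mem
  symm := ⟨by
    rintro _ _ ⟨hne, u, v, huv, rfl, rfl⟩
    exact ⟨hne.symm, v, u, huv.symm, rfl, rfl⟩⟩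

theorem connected_mapSubgraph (hf : IsWeakHom G H f) {T : G.Subgraph} (hT : T.Connected) :
    (hf.mapSubgraph T).Connected := by
  rw [Subgraph.connected_iff'] at hT ⊢
  have hweak : IsWeakHom T.coe (hf.mapSubgraph T).coe (T.verts.imageFactorization f) :=
    fun u v huv hne => ⟨fun h => hne (Subtype.ext h), u, v, huv, rfl, rfl⟩
  exact hweak.connected_of_surjective Set.imageFactorization_surjective hT

theorem edgeSet_mapSubgraph_subset (hf : IsWeakHom G H f) (T : G.Subgraph) :
    (hf.mapSubgraph T).edgeSet ⊆ Sym2.map f '' T.edgeSet := by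
  rintro ⟨x, y⟩ ⟨-, u, v, huv, rfl, rfl⟩
  exact ⟨s(u, v), huv, rfl⟩

theorem ncard_edgeSet_mapSubgraph_le (hf : IsWeakHom G H f) {T : G.Subgraph}
    (hT : T.edgeSet.Finite) : (hf.mapSubgraph T).edgeSet.ncard ≤ T.edgeSet.ncard :=
  (Set.ncard_le_ncard (hf.edgeSet_mapSubgraph_subset T) (hT.image _)).trans
    (Set.ncard_image_le hT)

end IsWeakHom

theorem steinerDist_le_ncard_edgeSet {S : Set V} {T : G.Subgraph} (hT : T.Connected)
    (hST : S ⊆ T.verts) : steinerDist G S ≤ T.edgeSet.ncard :=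
  Nat.sInf_le ⟨T, hT, hST, rfl⟩

theorem exists_ncard_edgeSet_eq_steinerDist {S : Set V}
    (hS : ∃ T : G.Subgraph, T.Connected ∧ S ⊆ T.verts) :
    ∃ T : G.Subgraph, T.Connected ∧ S ⊆ T.verts ∧ T.edgeSet.ncard = steinerDist G S := by
  obtain ⟨T, hT, hST⟩ := hS
  exact Nat.sInf_mem (s := {n | ∃ T : G.Subgraph, T.Connected ∧ S ⊆ T.verts ∧ T.edgeSet.ncard = n})
    ⟨_, T, hT, hST, rfl⟩

theorem exists_connected_subgraph_superset (hG : G.Connected) (S : Set V) :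
    ∃ T : G.Subgraph, T.Connected ∧ S ⊆ T.verts :=
  ⟨⊤, Subgraph.connected_iff'.2 (Subgraph.topIso.connected_iff.2 hG), S.subset_univ⟩

theorem IsWeakHom.steinerDist_image_le [Finite G.edgeSet] (hf : IsWeakHom G H f) {S : Set V}
    (hS : ∃ T : G.Subgraph, T.Connected ∧ S ⊆ T.verts) :
    steinerDist H (f '' S) ≤ steinerDist G S := by
  obtain ⟨T, hT, hST, hcard⟩ := exists_ncard_edgeSet_eq_steinerDist hS
  calc
    steinerDist H (f '' S) ≤ (hf.mapSubgraph T).edgeSet.ncard :=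
      steinerDist_le_ncard_edgeSet (hf.connected_mapSubgraph hT) (Set.image_mono hST)
    _ ≤ T.edgeSet.ncard :=
      hf.ncard_edgeSet_mapSubgraph_le (G.edgeSet.toFinite.subset T.edgeSet_subset)
    _ = steinerDist G S := hcard

theorem IsTwin.adj_of_adj {u v w : V} (huv : IsTwin G u v) (hvw : G.Adj v w) (hwu : w ≠ u) :
    G.Adj u w :=
  (huv.superset ⟨hvw, hwu⟩).1

theorem exists_twin_retraction {R : Set V} (hR : ∀ v, ∃ r ∈ R, IsTwin G r v) :
    ∃ ρ : V → R, (∀ v, IsTwin G (ρ v) v) ∧ Function.LeftInverse ρ Subtype.val := by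
  have h : ∀ v, ∃ r : R, IsTwin G r v ∧ (v ∈ R → (r : V) = v) := by
    intro v
    by_cases hv : v ∈ R
    · exact ⟨⟨v, hv⟩, rfl, fun _ => rfl⟩
    · obtain ⟨r, hr, hrv⟩ := hR v
      exact ⟨⟨r, hr⟩, hrv, fun h => absurd h hv⟩
  choose ρ hρ hfix using h
  exact ⟨ρ, hρ, fun r => Subtype.ext (hfix r r.2)⟩

theorem isWeakHom_of_twin_retraction {R : Set V} {ρ : V → R} (hρ : ∀ v, IsTwin G (ρ v) v)
    (hfix : Function.LeftInverse ρ Subtype.val) : IsWeakHom G (G.induce R) ρ := by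
  intro u v huv hne
  -- If `v` were `ρ u`, then `v ∈ R` would be fixed by `ρ`, and the edge would collapse.
  have hv : v ≠ ρ u := by
    rintro rfl
    exact hne (hfix (ρ u)).symm
  have hleft : G.Adj (ρ u) v := (hρ u).adj_of_adj huv hv
  exact ((hρ v).adj_of_adj hleft.symm (Subtype.coe_ne_coe.2 hne)).symm

theorem steinerDist_reducedGraph_eq_general [Finite G.edgeSet] {R S : Set V}
    (hR : ∀ v, ∃ r ∈ R, IsTwin G r v) (hSR : S ⊆ R)
    (hS : ∃ T : G.Subgraph, T.Connected ∧ S ⊆ T.verts) :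
    steinerDist (G.induce R) (Subtype.val ⁻¹' S) = steinerDist G S := by
  obtain ⟨ρ, hρ, hfix⟩ := exists_twin_retraction hR
  have hweak : IsWeakHom G (G.induce R) ρ := isWeakHom_of_twin_retraction hρ hfix
  have hval : Subtype.val '' (Subtype.val ⁻¹' S : Set R) = S :=
    (Subtype.image_preimage_coe R S).trans (Set.inter_eq_right.2 hSR)
  have himage : ρ '' S = Subtype.val ⁻¹' S := by
    rw [← hval, hfix.image_image, hval]
  apply le_antisymm
  · rw [← himage]
    exact hweak.steinerDist_image_le hS
  · obtain ⟨T, hT, hST⟩ := hS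
    let ι : G.induce R ↪g G := Embedding.induce R
    have : Finite (G.induce R).edgeSet := Finite.of_injective _ ι.mapEdgeSet.injective
    conv_lhs => rw [← hval]
    exact (IsWeakHom.of_hom ι.toHom).steinerDist_image_le
      ⟨hweak.mapSubgraph T, hweak.connected_mapSubgraph hT, himage ▸ Set.image_mono hST⟩

end

/-- Let `G` be a finite connected simple graph with twin classes
`C 1, …, C k`, and let `S` be a set of vertices meeting each twin class in at most one
vertex.  Choose the representatives `c i` so that every element of `S` is a
representative (`S ⊆ Set.range c`), and let `H` be the reduced graph, i.e. the subgraph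
induced by `{c 1, …, c k}`.  Then the Steiner distance of `S` computed in `H` equals the
Steiner distance of `S` computed in `G`. -/
theorem steinerDist_reducedGraph_eq {V : Type*} [Fintype V] (G : SimpleGraph V)
    (hG : G.Connected)
    (k : ℕ) (C : Fin k → Set V) (c : Fin k → V)
    (hC : ∀ i, C i = {v | IsTwin G (c i) v})
    (hcover : ∀ v : V, ∃ i, v ∈ C i)
    (hdisj : ∀ i j, i ≠ j → Disjoint (C i) (C j))
    (S : Set V) (hone : ∀ i, (S ∩ C i).Subsingleton) (hrep : S ⊆ Set.range c) :
    steinerDist (G.induce (Set.range c)) (Subtype.val ⁻¹' S) = steinerDist G S := by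
  have hR : ∀ v, ∃ r ∈ Set.range c, IsTwin G r v := fun v =>
    (hcover v).elim fun i hi => ⟨c i, ⟨i, rfl⟩, (hC i).subset hi⟩
  exact steinerDist_reducedGraph_eq_general hR hrep (exists_connected_subgraph_superset hG S)
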